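/- Assume 2g − 2 + n ≥ 1. Every n-pointed weighted tropical curve of genus g is tropically equivalent to an n-pointed weighted tropical curve (Γ, w, ℓ) whose underlying weighted graph (Γ, w) is stable, i.e. in which every vertex of weight 0 has valence at least 3 and every vertex of weight 1 has valence at least 1. -/

import Mathlib

/-! The number of vertices is decreased by elementary moves until the graph is stable.

Weight-`0` vertices of valence `2` are smoothed first (`exists_move_of_valence_two`), and a
weight-`0` vertex of valence `1` is pruned only when its neighbour is not such a `2`-valent
vertex (`exists_move1`).  This order matters: pruning a leaf next to a `2`-valent vertex
of weight `0` would create a new leaf whose edge has finite length, which is not a tropical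
curve, whereas smoothing the neighbour first makes the merged edge infinite.

A move removes one vertex and two half-edges.  Since `|H| = 2|E| + n` (`card_H`), it removes
exactly one edge, so the genus is unchanged (`genus_shrink`).

If no move applies at an unstable vertex, connectedness forces the graph to consist of that
vertex, or of two leaves joined by an edge (`univ_of_closed`).  Counting half-edges then
gives `2g - 2 + n ≤ 0`. -/

open scoped ENNReal NNReal Classical

/-- A combinatorial graph with `n` labeled legs: a finite nonempty set `V` of vertices, a
finite set `H` of half-edges, an involution `ι` on `H` whose fixed points are exactly the
`n` labeled legs, and an endpoint map `ε : H → V`.  Edges are the pairs `{h, ι h}` with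
`ι h ≠ h`. -/
structure LeggedGraph (n : ℕ) where
  V : Type
  H : Type
  finV : Finite V
  finH : Finite H
  neV : Nonempty V
  ι : H → H
  ι_invol : ∀ h, ι (ι h) = h
  ε : H → V
  leg : Fin n → H
  leg_fix : ∀ i, ι (leg i) = leg i
  leg_inj : Function.Injective leg
  fix_leg : ∀ h, ι h = h → ∃ i, leg i = h

attribute [instance] LeggedGraph.finV LeggedGraph.finH LeggedGraph.neV

namespace LeggedGraph

variable {n : ℕ}

/-- The type of edges of `G`: unordered pairs `{h, ι h}` with `ι h ≠ h`. -/
def Edge (G : LeggedGraph n) : Type :=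
  Quot (fun h h' : {h : G.H // G.ι h ≠ h} => (h' : G.H) = G.ι (h : G.H))

/-- The edge determined by a non-fixed half-edge. -/
def edgeMk (G : LeggedGraph n) (h : G.H) (hne : G.ι h ≠ h) : G.Edge := Quot.mk _ ⟨h, hne⟩

/-- The number of edges of `G`. -/
noncomputable def numEdges (G : LeggedGraph n) : ℕ := Nat.card G.Edge

/-- Two vertices are adjacent if they are the two endpoints of some edge. -/
def adjRel (G : LeggedGraph n) : G.V → G.V → Prop := fun v v' =>
  ∃ h, G.ι h ≠ h ∧ G.ε h = v ∧ G.ε (G.ι h) = v'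

/-- The number of connected components of `G`. -/
noncomputable def numComps (G : LeggedGraph n) : ℕ := Nat.card (Quot G.adjRel)

/-- `G` is connected: any two vertices can be joined by an edge path. -/
def IsConnected (G : LeggedGraph n) : Prop := ∀ v v' : G.V, Relation.EqvGen G.adjRel v v'

/-- The first Betti number `b₁(G) = |E(G)| − |V(G)| + c`, where `c` is the number of
connected components (stated as `|E(G)| + c − |V(G)|`, a natural number). -/
noncomputable def b1 (G : LeggedGraph n) : ℕ := G.numEdges + G.numComps - Nat.card G.V

/-- The valence of a vertex: the number of half-edges based at it (a loop counts twice,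
legs count once). -/
noncomputable def valence (G : LeggedGraph n) (v : G.V) : ℕ := Nat.card {h : G.H // G.ε h = v}

/-- `G` is 3-regular if every vertex has valence `3`. -/
def ThreeRegular (G : LeggedGraph n) : Prop := ∀ v, G.valence v = 3

/-- The genus of the weighted graph `(G, w)`: `b₁(G) + Σ_v w(v)`. -/
noncomputable def genus (G : LeggedGraph n) (w : G.V → ℕ) : ℕ := G.b1 + ∑ᶠ v, w v

/-- Stability of a weighted graph: every vertex of weight `0` has valence at least `3` and
every vertex of weight `1` has valence at least `1`. -/
def Stable (G : LeggedGraph n) (w : G.V → ℕ) : Prop :=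
  ∀ v, (w v = 0 → 3 ≤ G.valence v) ∧ (w v = 1 → 1 ≤ G.valence v)

/-- The set of half-edges of the edges meeting a set `S` of half-edges: this is the
set of half-edges of the edge set determined by `S` (legs and fixed half-edges are
discarded, and the set is closed under the involution). -/
def sym (G : LeggedGraph n) (S : Set G.H) : Set G.H :=
  {h | (h ∈ S ∨ G.ι h ∈ S) ∧ G.ι h ≠ h}

theorem sym_iota_mem {G : LeggedGraph n} {S : Set G.H} {h : G.H} (hh : h ∈ G.sym S) :
    G.ι h ∈ G.sym S := by
  obtain ⟨h1, h2⟩ := hh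
  constructor
  · rcases h1 with h1 | h1
    · right; rwa [G.ι_invol]
    · left; exact h1
  · rw [G.ι_invol]
    exact fun e => h2 e.symm

theorem sym_iota_not_mem {G : LeggedGraph n} {S : Set G.H} {h : G.H} (hh : h ∉ G.sym S) :
    G.ι h ∉ G.sym S := fun hc => by
  have h2 := sym_iota_mem hc
  rw [G.ι_invol] at h2
  exact hh h2

/-- The relation identifying the two endpoints of every edge in `S`. -/
def contrRel (G : LeggedGraph n) (S : Set G.H) : G.V → G.V → Prop := fun v v' =>
  ∃ h ∈ G.sym S, G.ε h = v ∧ G.ε (G.ι h) = v'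

/-- The contraction `Γ/S` of the set of edges `S`: its vertices are the connected
components of the graph obtained by removing all edges not in `S`, its half-edges are the
half-edges not belonging to `S`, and legs are kept. -/
def contract (G : LeggedGraph n) (S : Set G.H) : LeggedGraph n where
  V := Quot (G.contrRel S)
  H := {h : G.H // h ∉ G.sym S}
  finV := inferInstance
  finH := inferInstance
  neV := G.neV.map (Quot.mk _)
  ι := fun h => ⟨G.ι h.1, sym_iota_not_mem h.2⟩
  ι_invol := fun h => Subtype.ext (G.ι_invol h.1)
  ε := fun h => Quot.mk _ (G.ε h.1)
  leg := fun i => ⟨G.leg i, fun hc => hc.2 (G.leg_fix i)⟩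
  leg_fix := fun i => Subtype.ext (G.leg_fix i)
  leg_inj := fun i j hij => G.leg_inj (congrArg Subtype.val hij)
  fix_leg := fun h hh => by
    obtain ⟨i, hi⟩ := G.fix_leg h.1 (congrArg Subtype.val hh)
    exact ⟨i, Subtype.ext hi⟩

/-- The graph `Γ − T` obtained from `G` by keeping only the edges in `S` (and keeping all
vertices and all legs). -/
def restrict (G : LeggedGraph n) (S : Set G.H) : LeggedGraph n where
  V := G.V
  H := {h : G.H // h ∈ G.sym S ∨ ∃ i, G.leg i = h}
  finV := G.finV
  finH := inferInstance
  neV := G.neV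
  ι := fun h => ⟨G.ι h.1, by
    rcases h.2 with hm | ⟨i, hi⟩
    · exact Or.inl (sym_iota_mem hm)
    · refine Or.inr ⟨i, ?_⟩
      rw [← hi]
      exact (G.leg_fix i).symm⟩
  ι_invol := fun h => Subtype.ext (G.ι_invol h.1)
  ε := fun h => G.ε h.1
  leg := fun i => ⟨G.leg i, Or.inr ⟨i, rfl⟩⟩
  leg_fix := fun i => Subtype.ext (G.leg_fix i)
  leg_inj := fun i j hij => G.leg_inj (congrArg Subtype.val hij)
  fix_leg := fun h hh => by
    rcases h.2 with hm | ⟨i, hi⟩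
    · exact absurd (congrArg Subtype.val hh) hm.2
    · exact ⟨i, Subtype.ext hi⟩

/-- The subgraph of `Γ − T` lying over a vertex `x` of the contraction `Γ/S`
(the fiber `σ⁻¹(x)` of the contraction map `σ`), viewed as a graph without legs. -/
def fiber (G : LeggedGraph n) (S : Set G.H) (x : Quot (G.contrRel S)) : LeggedGraph 0 where
  V := {v : G.V // Quot.mk (G.contrRel S) v = x}
  H := {h : G.H // h ∈ G.sym S ∧ Quot.mk (G.contrRel S) (G.ε h) = x}
  finV := inferInstance
  finH := inferInstance
  neV := by
    obtain ⟨v, hv⟩ := Quot.exists_rep x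
    exact ⟨⟨v, hv⟩⟩
  ι := fun h => ⟨G.ι h.1, sym_iota_mem h.2.1, by
    have h2 : Quot.mk (G.contrRel S) (G.ε h.1) = Quot.mk (G.contrRel S) (G.ε (G.ι h.1)) :=
      Quot.sound ⟨h.1, h.2.1, rfl, rfl⟩
    rw [← h2]
    exact h.2.2⟩
  ι_invol := fun h => Subtype.ext (G.ι_invol h.1)
  ε := fun h => ⟨G.ε h.1, h.2.2⟩
  leg := Fin.elim0
  leg_fix := fun i => i.elim0
  leg_inj := fun i => i.elim0
  fix_leg := fun h hh => absurd (congrArg Subtype.val hh) h.2.1.2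

/-- The weight function `w/S` of the weighted contraction of `(G, w)`:
`w/S(x) = b₁(σ⁻¹(x)) + Σ_{v ∈ σ⁻¹(x)} w(v)`. -/
noncomputable def wcontract (G : LeggedGraph n) (w : G.V → ℕ) (S : Set G.H) :
    (G.contract S).V → ℕ := fun x =>
  (G.fiber S x).b1 + ∑ᶠ v : {v : G.V // Quot.mk (G.contrRel S) v = x}, w v.1

/-- Isomorphism of graphs with `n` labeled legs. -/
def GIso (G G' : LeggedGraph n) : Prop :=
  ∃ (fV : G.V ≃ G'.V) (fH : G.H ≃ G'.H),
    (∀ h, fH (G.ι h) = G'.ι (fH h)) ∧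
    (∀ h, fV (G.ε h) = G'.ε (fH h)) ∧
    (∀ i, fH (G.leg i) = G'.leg i)

/-- Isomorphism of weighted graphs with `n` labeled legs. -/
def WIso (G : LeggedGraph n) (w : G.V → ℕ) (G' : LeggedGraph n) (w' : G'.V → ℕ) : Prop :=
  ∃ (fV : G.V ≃ G'.V) (fH : G.H ≃ G'.H),
    (∀ h, fH (G.ι h) = G'.ι (fH h)) ∧
    (∀ h, fV (G.ε h) = G'.ε (fH h)) ∧
    (∀ i, fH (G.leg i) = G'.leg i) ∧
    (∀ v, w' (fV v) = w v)

/-- Isomorphism of metric weighted graphs with `n` labeled legs (lengths take values in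
`ℝ≥0 ∪ {∞}`, realized as `ℝ≥0∞`). -/
def MIso (G : LeggedGraph n) (w : G.V → ℕ) (l : G.H → ℝ≥0∞)
    (G' : LeggedGraph n) (w' : G'.V → ℕ) (l' : G'.H → ℝ≥0∞) : Prop :=
  ∃ (fV : G.V ≃ G'.V) (fH : G.H ≃ G'.H),
    (∀ h, fH (G.ι h) = G'.ι (fH h)) ∧
    (∀ h, fV (G.ε h) = G'.ε (fH h)) ∧
    (∀ i, fH (G.leg i) = G'.leg i) ∧
    (∀ v, w' (fV v) = w v) ∧
    (∀ h, l' (fH h) = l h)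

/-- `G'` is obtained from `G` by contracting exactly one edge, which is not a loop. -/
def OneEdgeContr (G G' : LeggedGraph n) : Prop :=
  ∃ h₀ : G.H, G.ι h₀ ≠ h₀ ∧ G.ε (G.ι h₀) ≠ G.ε h₀ ∧ GIso (G.contract {h₀}) G'

/-- `(G', w')` is obtained from `(G, w)` by the weighted contraction of exactly one edge. -/
def OneEdgeWContr (G : LeggedGraph n) (w : G.V → ℕ) (G' : LeggedGraph n)
    (w' : G'.V → ℕ) : Prop :=
  ∃ h₀ : G.H, G.ι h₀ ≠ h₀ ∧ WIso (G.contract {h₀}) (G.wcontract w {h₀}) G' w'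

/-- The set of half-edges of the edges given length `0` by a point `p` of the cone. -/
def zeroSet (G : LeggedGraph n) (p : G.Edge → ℝ≥0∞) : Set G.H :=
  {h | ∃ hne : G.ι h ≠ h, p (G.edgeMk h hne) = 0}

/-- The length function of the metric weighted graph associated to a point `p` of the
cone: each surviving edge `e` gets length `p e`, and each leg gets length `∞`. -/
noncomputable def assocLen (G : LeggedGraph n) (p : G.Edge → ℝ≥0∞)
    (h : {h : G.H // h ∉ G.sym (G.zeroSet p)}) : ℝ≥0∞ :=
  if hne : G.ι h.1 = h.1 then ⊤ else p (G.edgeMk h.1 hne)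

/-- `p ∼ q`: the metric weighted graphs associated to the points `p` and `q` are
isomorphic. -/
def ptRel (G : LeggedGraph n) (w : G.V → ℕ) (p q : G.Edge → ℝ≥0∞) : Prop :=
  MIso (G.contract (G.zeroSet p)) (G.wcontract w (G.zeroSet p)) (G.assocLen p)
       (G.contract (G.zeroSet q)) (G.wcontract w (G.zeroSet q)) (G.assocLen q)

/-- The equivalence on the closed cone `ℝ≥0^E`. -/
def ptRelNN (G : LeggedGraph n) (w : G.V → ℕ) (p q : G.Edge → ℝ≥0) : Prop :=
  G.ptRel w (fun e => (p e : ℝ≥0∞)) (fun e => (q e : ℝ≥0∞))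

end LeggedGraph
open LeggedGraph

/-- An `n`-pointed weighted tropical curve of genus `g`: a connected graph `Γ` with `n`
labeled legs, a weight function `w` with `b₁(Γ) + Σ w = g`, and a length function with
values in `ℝ≥0 ∪ {∞}` (legs have length `∞`, and an edge has length `∞` if and only if it
is adjacent to a `1`-valent vertex of weight `0`). -/
structure TropCurve (g n : ℕ) where
  Γ : LeggedGraph n
  conn : Γ.IsConnected
  w : Γ.V → ℕ
  genus_eq : Γ.genus w = g
  len : Γ.H → ℝ≥0∞
  len_symm : ∀ h, len (Γ.ι h) = len h
  len_pos : ∀ h, 0 < len h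
  len_top_iff : ∀ h, len h = ⊤ ↔
    (Γ.ι h = h ∨ (Γ.valence (Γ.ε h) = 1 ∧ w (Γ.ε h) = 0) ∨
      (Γ.valence (Γ.ε (Γ.ι h)) = 1 ∧ w (Γ.ε (Γ.ι h)) = 0))

namespace TropCurve

variable {g n : ℕ}

/-- Isomorphism of `n`-pointed weighted tropical curves. -/
def Iso (C C' : TropCurve g n) : Prop :=
  ∃ (fV : C.Γ.V ≃ C'.Γ.V) (fH : C.Γ.H ≃ C'.Γ.H),
    (∀ h, fH (C.Γ.ι h) = C'.Γ.ι (fH h)) ∧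
    (∀ h, fV (C.Γ.ε h) = C'.Γ.ε (fH h)) ∧
    (∀ i, fH (C.Γ.leg i) = C'.Γ.leg i) ∧
    (∀ v, C'.w (fV v) = C.w v) ∧
    (∀ h, C'.len (fH h) = C.len h)

/-- Move (i): `C'` is obtained from `C` by removing a `1`-valent vertex `v₀` of weight
`0` together with its adjacent edge `{h₀, ι h₀}` (all other data being unchanged). -/
def Move1 (C C' : TropCurve g n) : Prop :=
  ∃ (v₀ : C.Γ.V) (h₀ : C.Γ.H),
    C.Γ.valence v₀ = 1 ∧ C.w v₀ = 0 ∧ C.Γ.ε h₀ = v₀ ∧ C.Γ.ι h₀ ≠ h₀ ∧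
    ∃ (fV : C'.Γ.V → C.Γ.V) (fH : C'.Γ.H → C.Γ.H),
      Function.Injective fV ∧ Set.range fV = {v | v ≠ v₀} ∧
      Function.Injective fH ∧ Set.range fH = {h | h ≠ h₀ ∧ h ≠ C.Γ.ι h₀} ∧
      (∀ x, fH (C'.Γ.ι x) = C.Γ.ι (fH x)) ∧
      (∀ x, fV (C'.Γ.ε x) = C.Γ.ε (fH x)) ∧
      (∀ i, fH (C'.Γ.leg i) = C.Γ.leg i) ∧
      (∀ x, C'.w x = C.w (fV x)) ∧
      (∀ x, C'.len x = C.len (fH x))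

/-- Move (ii), first case: `C'` is obtained from `C` by removing a `2`-valent vertex `v₀`
of weight `0` adjacent to two distinct edges (via the half-edges `h₁, h₂`), which are
merged into a single edge whose length is the sum of the two lengths. -/
def Move2a (C C' : TropCurve g n) : Prop :=
  ∃ (v₀ : C.Γ.V) (h₁ h₂ : C.Γ.H),
    C.Γ.valence v₀ = 2 ∧ C.w v₀ = 0 ∧
    h₁ ≠ h₂ ∧ C.Γ.ε h₁ = v₀ ∧ C.Γ.ε h₂ = v₀ ∧
    C.Γ.ι h₁ ≠ h₁ ∧ C.Γ.ι h₂ ≠ h₂ ∧ C.Γ.ι h₁ ≠ h₂ ∧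
    ∃ (fV : C'.Γ.V → C.Γ.V) (fH : C'.Γ.H → C.Γ.H),
      Function.Injective fV ∧ Set.range fV = {v | v ≠ v₀} ∧
      Function.Injective fH ∧ Set.range fH = {h | h ≠ h₁ ∧ h ≠ h₂} ∧
      (∀ x, fV (C'.Γ.ε x) = C.Γ.ε (fH x)) ∧
      (∀ i, fH (C'.Γ.leg i) = C.Γ.leg i) ∧
      (∀ x, C'.w x = C.w (fV x)) ∧
      (∀ x, (fH x = C.Γ.ι h₁ → fH (C'.Γ.ι x) = C.Γ.ι h₂) ∧
            (fH x = C.Γ.ι h₂ → fH (C'.Γ.ι x) = C.Γ.ι h₁) ∧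
            (fH x ≠ C.Γ.ι h₁ → fH x ≠ C.Γ.ι h₂ → fH (C'.Γ.ι x) = C.Γ.ι (fH x))) ∧
      (∀ x, ((fH x = C.Γ.ι h₁ ∨ fH x = C.Γ.ι h₂) → C'.len x = C.len h₁ + C.len h₂) ∧
            (fH x ≠ C.Γ.ι h₁ → fH x ≠ C.Γ.ι h₂ → C'.len x = C.len (fH x)))

/-- Move (ii), second case: `C'` is obtained from `C` by removing a `2`-valent vertex
`v₀` of weight `0` adjacent to a leg `h₁` and an edge (via `h₂`); the edge and the leg
are merged into a single leg based at the other endpoint of the edge. -/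
def Move2b (C C' : TropCurve g n) : Prop :=
  ∃ (v₀ : C.Γ.V) (h₁ h₂ : C.Γ.H),
    C.Γ.valence v₀ = 2 ∧ C.w v₀ = 0 ∧
    h₁ ≠ h₂ ∧ C.Γ.ε h₁ = v₀ ∧ C.Γ.ε h₂ = v₀ ∧
    C.Γ.ι h₁ = h₁ ∧ C.Γ.ι h₂ ≠ h₂ ∧
    ∃ (fV : C'.Γ.V → C.Γ.V) (fH : C'.Γ.H → C.Γ.H),
      Function.Injective fV ∧ Set.range fV = {v | v ≠ v₀} ∧
      Function.Injective fH ∧ Set.range fH = {h | h ≠ h₂ ∧ h ≠ C.Γ.ι h₂} ∧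
      (∀ i, fH (C'.Γ.leg i) = C.Γ.leg i) ∧
      (∀ x, C'.w x = C.w (fV x)) ∧
      (∀ x, (fH x = h₁ →
              fH (C'.Γ.ι x) = h₁ ∧ fV (C'.Γ.ε x) = C.Γ.ε (C.Γ.ι h₂) ∧ C'.len x = ⊤) ∧
            (fH x ≠ h₁ →
              fH (C'.Γ.ι x) = C.Γ.ι (fH x) ∧ fV (C'.Γ.ε x) = C.Γ.ε (fH x) ∧
                C'.len x = C.len (fH x)))

/-- An elementary move between tropical curves. -/
def ElemMove (C C' : TropCurve g n) : Prop := Move1 C C' ∨ Move2a C C' ∨ Move2b C C'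

/-- Tropical equivalence: the equivalence relation generated by the elementary moves
(i.e. finite sequences of elementary moves and their inverses). -/
def TropEquiv (C C' : TropCurve g n) : Prop := Relation.EqvGen ElemMove C C'

end TropCurve

namespace LeggedGraph

variable {n : ℕ}

/-! ### Counting half-edges, and connectedness -/

lemma iota_inj (G : LeggedGraph n) {x y : G.H} (h : G.ι x = G.ι y) : x = y := by
  rw [← G.ι_invol x, h, G.ι_invol]

lemma edge_eq_iff (G : LeggedGraph n) (x y : {h : G.H // G.ι h ≠ h}) :
    (Quot.mk _ x : G.Edge) = Quot.mk _ y ↔ (y = x ∨ (y : G.H) = G.ι x) := by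
  constructor
  · intro h
    have h' := Quot.eqvGen_exact h
    clear h
    induction h' with
    | rel x y h => exact Or.inr h
    | refl x => exact Or.inl rfl
    | symm x y h ih =>
      rcases ih with e | e
      · exact Or.inl e.symm
      · right; rw [e, G.ι_invol]
    | trans x y z h1 h2 ih1 ih2 =>
      rcases ih1 with e | e <;> rcases ih2 with e' | e'
      · exact Or.inl (e'.trans e)
      · right; rw [e', e]
      · right; rw [e', e]
      · left; apply Subtype.ext; rw [e', e, G.ι_invol]
  · rintro (rfl | h)
    · rfl
    · exact Quot.sound h

/-- Every edge consists of two half-edges and every leg of one. -/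
lemma card_H (G : LeggedGraph n) : Nat.card G.H = 2 * G.numEdges + n := by
  have h1 : Nat.card {h : G.H // G.ι h = h} = n := by
    have e : Fin n ≃ {h : G.H // G.ι h = h} := Equiv.ofBijective
      (fun i => ⟨G.leg i, G.leg_fix i⟩)
      ⟨fun i j hij => G.leg_inj (congrArg Subtype.val hij), fun h => by
        obtain ⟨i, hi⟩ := G.fix_leg h.1 h.2
        exact ⟨i, Subtype.ext hi⟩⟩
    rw [← Nat.card_congr e, Nat.card_fin]
  have h2 : Nat.card {h : G.H // G.ι h ≠ h} = 2 * G.numEdges := by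
    let q : {h : G.H // G.ι h ≠ h} → G.Edge := Quot.mk _
    have : Finite G.Edge := Finite.of_surjective q Quot.exists_rep
    have : Fintype G.Edge := Fintype.ofFinite _
    have hf : ∀ e, Nat.card {x // q x = e} = 2 := by
      intro e
      obtain ⟨x, rfl⟩ := Quot.exists_rep e
      have hs : {y | q y = Quot.mk _ x} =
          {x, ⟨G.ι x.1, fun h => x.2 (G.iota_inj h)⟩} := by
        ext y
        refine (eq_comm.trans (G.edge_eq_iff x y)).trans (or_congr Iff.rfl ?_)
        exact ⟨fun e => Subtype.ext e, fun e => congrArg Subtype.val e⟩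
      change Set.ncard {y | q y = Quot.mk _ x} = 2
      rw [hs, Set.ncard_pair]
      intro h
      exact x.2 (congrArg Subtype.val h).symm
    rw [← Nat.card_congr (Equiv.sigmaFiberEquiv q), Nat.card_sigma]
    simp [hf, numEdges, Nat.card_eq_fintype_card, mul_comm]
  have h3 := Nat.card_congr (Equiv.sumCompl (fun h : G.H => G.ι h = h))
  rw [Nat.card_sum, h1] at h3
  rw [← h3, ← h2, add_comm]

lemma valence_eq (G : LeggedGraph n) (v : G.V) :
    G.valence v = Set.ncard {h | G.ε h = v} := rfl

/-- A nonempty set of vertices that is closed under adjacency is everything. -/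
lemma univ_of_closed {G : LeggedGraph n} (hG : G.IsConnected) (S : Set G.V) {v : G.V}
    (hv : v ∈ S) (hS : ∀ h, G.ε h ∈ S → G.ε (G.ι h) ∈ S) (x : G.V) : x ∈ S := by
  have key : ∀ y z, Relation.EqvGen G.adjRel y z → (y ∈ S ↔ z ∈ S) := by
    intro y z h
    induction h with
    | rel y z h =>
      obtain ⟨k, -, rfl, rfl⟩ := h
      refine ⟨hS k, fun h => ?_⟩
      have := hS _ h
      rwa [G.ι_invol] at this
    | refl y => rfl
    | symm y z _ ih => exact ih.symm
    | trans y z t _ _ ih1 ih2 => exact ih1.trans ih2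
  exact (key v x (hG v x)).1 hv

lemma numComps_eq_one {G : LeggedGraph n} (hG : G.IsConnected) : G.numComps = 1 := by
  rw [numComps, Nat.card_eq_one_iff_unique]
  refine ⟨⟨fun a b => ?_⟩, G.neV.map (Quot.mk _)⟩
  obtain ⟨x, rfl⟩ := Quot.exists_rep a
  obtain ⟨y, rfl⟩ := Quot.exists_rep b
  exact Quot.eqvGen_sound (hG x y)

lemma connected_of_retract {G G' : LeggedGraph n} (hG : G.IsConnected) (r : G.V → G'.V)
    (hr : Function.Surjective r)
    (hadj : ∀ h, G.ι h ≠ h → Relation.EqvGen G'.adjRel (r (G.ε h)) (r (G.ε (G.ι h)))) :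
    G'.IsConnected := by
  have key : ∀ y z, Relation.EqvGen G.adjRel y z → Relation.EqvGen G'.adjRel (r y) (r z) := by
    intro y z h
    induction h with
    | rel y z h =>
      obtain ⟨k, hk, rfl, rfl⟩ := h
      exact hadj k hk
    | refl y => exact .refl _
    | symm y z _ ih => exact ih.symm
    | trans y z t _ _ ih1 ih2 => exact ih1.trans _ _ _ ih2
  intro x y
  obtain ⟨x, rfl⟩ := hr x
  obtain ⟨y, rfl⟩ := hr y
  exact key _ _ (hG x y)

/-! ### Removing a vertex and two half-edges -/

/-- The data needed to remove a vertex `v₀` and two half-edges `a`, `b` that are not legs.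
The new involution `ι'` and endpoint map `ε'` are total maps on the old half-edges, whose
values at `a` and `b` are irrelevant; `u` is a surviving vertex onto which `v₀` retracts. -/
structure Shrink (G : LeggedGraph n) where
  v₀ : G.V
  a : G.H
  b : G.H
  ι' : G.H → G.H
  ε' : G.H → G.V
  u : G.V
  hu : u ≠ v₀
  hab : a ≠ b
  ha : G.ι a ≠ a
  hb : G.ι b ≠ b
  ne_a : ∀ h, h ≠ a → h ≠ b → ι' h ≠ a
  ne_b : ∀ h, h ≠ a → h ≠ b → ι' h ≠ b
  invol : ∀ h, h ≠ a → h ≠ b → ι' (ι' h) = h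
  fix : ∀ h, h ≠ a → h ≠ b → (ι' h = h ↔ G.ι h = h)
  ne_v₀ : ∀ h, h ≠ a → h ≠ b → ε' h ≠ v₀

/-- The graph obtained by carrying out the removal described by `D`. -/
def shrink (G : LeggedGraph n) (D : G.Shrink) : LeggedGraph n where
  V := {v : G.V // v ≠ D.v₀}
  H := {h : G.H // h ≠ D.a ∧ h ≠ D.b}
  finV := inferInstance
  finH := inferInstance
  neV := ⟨⟨D.u, D.hu⟩⟩
  ι := fun h => ⟨D.ι' h.1, D.ne_a h.1 h.2.1 h.2.2, D.ne_b h.1 h.2.1 h.2.2⟩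
  ι_invol := fun h => Subtype.ext (D.invol h.1 h.2.1 h.2.2)
  ε := fun h => ⟨D.ε' h.1, D.ne_v₀ h.1 h.2.1 h.2.2⟩
  leg := fun i => ⟨G.leg i, fun e => D.ha (e ▸ G.leg_fix i), fun e => D.hb (e ▸ G.leg_fix i)⟩
  leg_fix := fun i => Subtype.ext ((D.fix _ (fun e => D.ha (e ▸ G.leg_fix i))
    (fun e => D.hb (e ▸ G.leg_fix i))).2 (G.leg_fix i))
  leg_inj := fun i j hij => G.leg_inj (congrArg Subtype.val hij)
  fix_leg := fun h hh => by
    obtain ⟨i, hi⟩ := G.fix_leg h.1 ((D.fix h.1 h.2.1 h.2.2).1 (congrArg Subtype.val hh))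
    exact ⟨i, Subtype.ext hi⟩

/-- The inclusion of the surviving vertices. -/
def inclV (G : LeggedGraph n) (D : G.Shrink) (v : (G.shrink D).V) : G.V := v.1

/-- The inclusion of the surviving half-edges. -/
def inclH (G : LeggedGraph n) (D : G.Shrink) (h : (G.shrink D).H) : G.H := h.1

lemma inclV_injective (G : LeggedGraph n) (D : G.Shrink) : Function.Injective (G.inclV D) :=
  Subtype.val_injective

lemma inclH_injective (G : LeggedGraph n) (D : G.Shrink) : Function.Injective (G.inclH D) :=
  Subtype.val_injective

lemma range_inclV (G : LeggedGraph n) (D : G.Shrink) :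
    Set.range (G.inclV D) = {v | v ≠ D.v₀} :=
  Subtype.range_val

lemma range_inclH (G : LeggedGraph n) (D : G.Shrink) :
    Set.range (G.inclH D) = {h | h ≠ D.a ∧ h ≠ D.b} :=
  Subtype.range_val

lemma card_V_shrink (G : LeggedGraph n) (D : G.Shrink) :
    Nat.card (G.shrink D).V + 1 = Nat.card G.V := by
  have h := Set.ncard_add_ncard_compl ({D.v₀} : Set G.V)
  rw [Set.ncard_singleton] at h
  rw [← h, add_comm]
  rfl

lemma card_H_shrink (G : LeggedGraph n) (D : G.Shrink) :
    Nat.card (G.shrink D).H + 2 = Nat.card G.H := by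
  have h := Set.ncard_add_ncard_compl ({D.a, D.b} : Set G.H)
  rw [Set.ncard_pair D.hab] at h
  rw [← h, add_comm]
  congr 1
  refine Nat.card_congr (Equiv.subtypeEquivRight fun x => ?_)
  simp

lemma valence_shrink (G : LeggedGraph n) (D : G.Shrink) (v : (G.shrink D).V) :
    (G.shrink D).valence v = Set.ncard {h | h ≠ D.a ∧ h ≠ D.b ∧ D.ε' h = v.1} := by
  rw [valence_eq, ← Set.ncard_image_of_injective _ (G.inclH_injective D)]
  congr 1
  ext h
  constructor
  · rintro ⟨x, hx, rfl⟩
    exact ⟨x.2.1, x.2.2, congrArg Subtype.val hx⟩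
  · rintro ⟨h1, h2, h3⟩
    exact ⟨⟨h, h1, h2⟩, Subtype.ext h3, rfl⟩

lemma genus_shrink {G : LeggedGraph n} (hG : G.IsConnected) (D : G.Shrink)
    (hD : (G.shrink D).IsConnected) (w : G.V → ℕ) (hw : w D.v₀ = 0) :
    (G.shrink D).genus (fun v => w v.1) = G.genus w := by
  have hV := G.card_V_shrink D
  have hH := G.card_H_shrink D
  rw [card_H, card_H] at hH
  have hs : ∑ᶠ v : (G.shrink D).V, w v.1 = ∑ᶠ v, w v := by
    refine (finsum_set_coe_eq_finsum_mem (f := w) {v | v ≠ D.v₀}).trans (finsum_congr fun v => ?_)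
    by_cases h : v = D.v₀
    · simp [h, hw]
    · simp [h]
  rw [genus, genus, b1, b1, numComps_eq_one hG, numComps_eq_one hD, hs]
  omega

lemma shrink_connected {G : LeggedGraph n} (hG : G.IsConnected) (D : G.Shrink)
    (hadj : ∀ h, G.ι h ≠ h → ∀ v v' : (G.shrink D).V,
      (v.1 = G.ε h ∨ G.ε h = D.v₀ ∧ v.1 = D.u) →
      (v'.1 = G.ε (G.ι h) ∨ G.ε (G.ι h) = D.v₀ ∧ v'.1 = D.u) →
      Relation.EqvGen (G.shrink D).adjRel v v') :
    (G.shrink D).IsConnected := by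
  let r : G.V → (G.shrink D).V := fun v => if h : v = D.v₀ then ⟨D.u, D.hu⟩ else ⟨v, h⟩
  have hr : ∀ v, (r v).1 = v ∨ v = D.v₀ ∧ (r v).1 = D.u := by
    intro v
    by_cases h : v = D.v₀
    · right; simp [r, h]
    · left; simp [r, h]
  refine connected_of_retract hG r (fun v => ⟨v.1, ?_⟩) fun h hh => hadj h hh _ _ (hr _) (hr _)
  exact dif_neg v.2

end LeggedGraph

namespace TropCurve

variable {g n : ℕ}

/-- `v` is a leaf: a `1`-valent vertex of weight `0`. -/
def IsLeaf (Γ : LeggedGraph n) (w : Γ.V → ℕ) (v : Γ.V) : Prop := Γ.valence v = 1 ∧ w v = 0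

/-- The tropical curve on `C.Γ.shrink D`, with the inherited weights and the length
function `l`, a positive function on the old half-edges that is restricted to the new ones. -/
def shrinkCurve (C : TropCurve g n) (D : C.Γ.Shrink) (hw : C.w D.v₀ = 0)
    (hD : (C.Γ.shrink D).IsConnected) (l : C.Γ.H → ℝ≥0∞)
    (l_symm : ∀ h, h ≠ D.a → h ≠ D.b → l (D.ι' h) = l h)
    (l_pos : ∀ h, 0 < l h)
    (l_top : ∀ h, h ≠ D.a → h ≠ D.b → (l h = ⊤ ↔ (C.Γ.ι h = h ∨
      IsLeaf C.Γ C.w (D.ε' h) ∨ IsLeaf C.Γ C.w (D.ε' (D.ι' h)))))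
    (hleaf : ∀ v : (C.Γ.shrink D).V,
      IsLeaf (C.Γ.shrink D) (fun v => C.w v.1) v ↔ IsLeaf C.Γ C.w v.1) :
    TropCurve g n where
  Γ := C.Γ.shrink D
  conn := hD
  w := fun v => C.w v.1
  genus_eq := (genus_shrink C.conn D hD C.w hw).trans C.genus_eq
  len := fun h => l h.1
  len_symm := fun h => l_symm h.1 h.2.1 h.2.2
  len_pos := fun h => l_pos h.1
  len_top_iff := fun h => (l_top h.1 h.2.1 h.2.2).trans
    (or_congr ((D.fix h.1 h.2.1 h.2.2).symm.trans
      ⟨fun e => Subtype.ext e, fun e => congrArg Subtype.val e⟩)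
      (or_congr (hleaf ((C.Γ.shrink D).ε h)).symm
        (hleaf ((C.Γ.shrink D).ε ((C.Γ.shrink D).ι h))).symm))

/-! ### The three moves -/

/-- Move (i).  The hypothesis on the neighbour guarantees that it does not become a leaf. -/
lemma exists_move1 (C : TropCurve g n) (h₀ : C.Γ.H) (hv : C.Γ.valence (C.Γ.ε h₀) = 1)
    (hw : C.w (C.Γ.ε h₀) = 0) (hι : C.Γ.ι h₀ ≠ h₀)
    (hn : C.w (C.Γ.ε (C.Γ.ι h₀)) = 0 → 3 ≤ C.Γ.valence (C.Γ.ε (C.Γ.ι h₀))) :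
    ∃ C' : TropCurve g n, ElemMove C C' ∧ Nat.card C'.Γ.V + 1 = Nat.card C.Γ.V := by
  have huniq : ∀ h, C.Γ.ε h = C.Γ.ε h₀ → h = h₀ := by
    intro h hh
    rw [valence_eq, Set.ncard_eq_one] at hv
    obtain ⟨k, hk⟩ := hv
    have e1 : h ∈ {h | C.Γ.ε h = C.Γ.ε h₀} := hh
    have e2 : h₀ ∈ {h | C.Γ.ε h = C.Γ.ε h₀} := rfl
    rw [hk] at e1 e2
    exact e1.trans e2.symm
  let D : C.Γ.Shrink :=
    { v₀ := C.Γ.ε h₀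
      a := h₀
      b := C.Γ.ι h₀
      ι' := C.Γ.ι
      ε' := C.Γ.ε
      u := C.Γ.ε (C.Γ.ι h₀)
      hu := fun e => hι (huniq _ e)
      hab := hι.symm
      ha := hι
      hb := fun e => hι (C.Γ.iota_inj e)
      ne_a := fun h _ h2 e => h2 (by rw [← e, C.Γ.ι_invol])
      ne_b := fun h h1 _ e => h1 (C.Γ.iota_inj e)
      invol := fun h _ _ => C.Γ.ι_invol h
      fix := fun h _ _ => Iff.rfl
      ne_v₀ := fun h h1 _ e => h1 (huniq _ e) }
  have hD : (C.Γ.shrink D).IsConnected := by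
    refine shrink_connected C.conn D fun h hh v v' h1 h2 => ?_
    by_cases ha : h = h₀
    · have e : v = v' := by
        apply Subtype.ext
        subst ha
        rcases h1 with h1 | h1
        · exact absurd h1 v.2
        rcases h2 with h2 | h2
        · exact h1.2.trans h2.symm
        · exact h1.2.trans h2.2.symm
      exact e ▸ .refl _
    by_cases hb : h = C.Γ.ι h₀
    · have e : v = v' := by
        apply Subtype.ext
        subst hb
        rw [C.Γ.ι_invol] at h2
        rcases h2 with h2 | h2
        · exact absurd h2 v'.2
        rcases h1 with h1 | h1
        · exact h1.trans h2.2.symm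
        · exact h1.2.trans h2.2.symm
      exact e ▸ .refl _
    refine .rel _ _ ⟨⟨h, ha, hb⟩, fun e => hh (congrArg Subtype.val e), ?_, ?_⟩
    · apply Subtype.ext
      rcases h1 with h1 | h1
      · exact h1.symm
      · exact absurd (huniq _ h1.1) ha
    · apply Subtype.ext
      rcases h2 with h2 | h2
      · exact h2.symm
      · exact absurd (huniq _ h2.1) (D.ne_a h ha hb)
  have hval : ∀ v : (C.Γ.shrink D).V,
      (C.Γ.shrink D).valence v + (if v.1 = D.u then 1 else 0) = C.Γ.valence v.1 := by
    intro v
    rw [valence_shrink, valence_eq]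
    have hne : C.Γ.ε h₀ ≠ v.1 := fun e => v.2 e.symm
    split_ifs with hvu
    · rw [← Set.ncard_insert_of_notMem (a := C.Γ.ι h₀) (by simp [D])]
      congr 1
      ext h
      simp only [Set.mem_insert_iff, Set.mem_ofPred_eq, D]
      constructor
      · rintro (rfl | h)
        · exact hvu.symm
        · exact h.2.2
      · intro hh
        by_cases hb : h = C.Γ.ι h₀
        · exact Or.inl hb
        · exact Or.inr ⟨by rintro rfl; exact hne hh, hb, hh⟩
    · rw [add_zero]
      congr 1
      ext h
      simp only [Set.mem_ofPred_eq, D]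
      refine ⟨fun h => h.2.2, fun h => ⟨?_, ?_, h⟩⟩
      · rintro rfl; exact hne h
      · rintro rfl; exact hvu h.symm
  have hleaf : ∀ v : (C.Γ.shrink D).V,
      IsLeaf (C.Γ.shrink D) (fun v => C.w v.1) v ↔ IsLeaf C.Γ C.w v.1 := by
    intro v
    have h := hval v
    unfold IsLeaf
    split_ifs at h with hvu
    · have hn' : C.w v.1 = 0 → 3 ≤ C.Γ.valence v.1 := by rw [hvu]; exact hn
      constructor
      · rintro ⟨h1, h2⟩
        have := hn' h2
        omega
      · rintro ⟨h1, h2⟩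
        have := hn' h2
        omega
    · rw [← h, add_zero]
  refine ⟨C.shrinkCurve D hw hD C.len (fun h _ _ => C.len_symm h) C.len_pos
    (fun h _ _ => C.len_top_iff h) hleaf, Or.inl ⟨C.Γ.ε h₀, h₀, hv, hw, rfl, hι,
    C.Γ.inclV D, C.Γ.inclH D, C.Γ.inclV_injective D, C.Γ.range_inclV D,
    C.Γ.inclH_injective D, C.Γ.range_inclH D, fun _ => rfl, fun _ => rfl, fun _ => rfl,
    fun _ => rfl, fun _ => rfl⟩, C.Γ.card_V_shrink D⟩

/-- Move (ii) at a vertex with two distinct edges.  If both edges lead to the same vertex,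
the merged edge is a loop. -/
lemma exists_move2a (C : TropCurve g n) (v₀ : C.Γ.V) (h₁ h₂ : C.Γ.H)
    (hs : {h | C.Γ.ε h = v₀} = {h₁, h₂}) (h12 : h₁ ≠ h₂) (hw : C.w v₀ = 0)
    (hι₁ : C.Γ.ι h₁ ≠ h₁) (hι₂ : C.Γ.ι h₂ ≠ h₂) (hι₁₂ : C.Γ.ι h₁ ≠ h₂) :
    ∃ C' : TropCurve g n, ElemMove C C' ∧ Nat.card C'.Γ.V + 1 = Nat.card C.Γ.V := by
  have hv : C.Γ.valence v₀ = 2 := by rw [valence_eq, hs, Set.ncard_pair h12]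
  have hend : ∀ h, C.Γ.ε h = v₀ ↔ h = h₁ ∨ h = h₂ := fun h => by
    have := Set.ext_iff.1 hs h
    simpa using this
  have inv := C.Γ.ι_invol
  have hι₂₁ : C.Γ.ι h₂ ≠ h₁ := fun e => hι₁₂ (by rw [← e, inv])
  have hιne : C.Γ.ι h₁ ≠ C.Γ.ι h₂ := fun e => h12 (C.Γ.iota_inj e)
  let j : C.Γ.H → C.Γ.H := fun h =>
    if h = C.Γ.ι h₁ then C.Γ.ι h₂ else if h = C.Γ.ι h₂ then C.Γ.ι h₁ else C.Γ.ι h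
  have j1 : j (C.Γ.ι h₁) = C.Γ.ι h₂ := by simp [j]
  have j2 : j (C.Γ.ι h₂) = C.Γ.ι h₁ := by simp [j, hιne.symm]
  have j3 : ∀ h, h ≠ C.Γ.ι h₁ → h ≠ C.Γ.ι h₂ → j h = C.Γ.ι h := fun h a b => by
    simp [j, a, b]
  have ine : ∀ h k, h ≠ C.Γ.ι k → C.Γ.ι h ≠ k := fun h k hk e => hk (by rw [← e, inv])
  have iine : ∀ h k, h ≠ k → C.Γ.ι h ≠ C.Γ.ι k := fun h k hk e => hk (C.Γ.iota_inj e)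
  let D : C.Γ.Shrink :=
    { v₀ := v₀
      a := h₁
      b := h₂
      ι' := j
      ε' := C.Γ.ε
      u := C.Γ.ε (C.Γ.ι h₂)
      hu := fun e => ((hend _).1 e).elim hι₂₁ hι₂
      hab := h12
      ha := hι₁
      hb := hι₂
      ne_a := fun h _ _ => by
        by_cases a : h = C.Γ.ι h₁
        · rwa [a, j1]
        by_cases b : h = C.Γ.ι h₂
        · rwa [b, j2]
        · rw [j3 h a b]; exact ine _ _ a
      ne_b := fun h _ _ => by
        by_cases a : h = C.Γ.ι h₁
        · rwa [a, j1]
        by_cases b : h = C.Γ.ι h₂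
        · rwa [b, j2]
        · rw [j3 h a b]; exact ine _ _ b
      invol := fun h k1 k2 => by
        by_cases a : h = C.Γ.ι h₁
        · rw [a, j1, j2]
        by_cases b : h = C.Γ.ι h₂
        · rw [b, j2, j1]
        · rw [j3 h a b, j3 _ (iine _ _ k1) (iine _ _ k2), inv]
      fix := fun h k1 k2 => by
        by_cases a : h = C.Γ.ι h₁
        · rw [a, j1, inv]; exact iff_of_false hιne.symm hι₁.symm
        by_cases b : h = C.Γ.ι h₂
        · rw [b, j2, inv]; exact iff_of_false hιne hι₂.symm
        · rw [j3 h a b]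
      ne_v₀ := fun h k1 k2 e => ((hend _).1 e).elim k1 k2 }
  have hD : (C.Γ.shrink D).IsConnected := by
    -- The edge at `h₂` retracts to `u`, and the edge at `h₁` becomes the merged edge.
    have hrefl : ∀ v v' : (C.Γ.shrink D).V,
        (v.1 = v₀ ∨ v.1 = D.u) → (v'.1 = v₀ ∨ v'.1 = D.u) →
        Relation.EqvGen (C.Γ.shrink D).adjRel v v' := by
      intro v v' h h'
      have e : v = v' := Subtype.ext
        ((h.resolve_left v.2).trans (h'.resolve_left v'.2).symm)
      exact e ▸ .refl _
    have hedge : ∀ v v' : (C.Γ.shrink D).V, (v.1 = v₀ ∨ v.1 = D.u) →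
        v'.1 = C.Γ.ε (C.Γ.ι h₁) → Relation.EqvGen (C.Γ.shrink D).adjRel v v' := by
      intro v v' h h'
      refine .rel _ _ ⟨⟨C.Γ.ι h₂, hι₂₁, hι₂⟩, fun e => hιne ?_, ?_, ?_⟩
      · exact j2.symm.trans (congrArg Subtype.val e)
      · exact Subtype.ext (h.resolve_left v.2).symm
      · exact Subtype.ext ((congrArg C.Γ.ε j2).trans h'.symm)
    have he1 : C.Γ.ε h₁ = v₀ := (hend _).2 (Or.inl rfl)
    have he2 : C.Γ.ε h₂ = v₀ := (hend _).2 (Or.inr rfl)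
    have ho : ∀ h, h ≠ h₁ → h ≠ h₂ → C.Γ.ε h ≠ v₀ := D.ne_v₀
    refine shrink_connected C.conn D fun h hh v v' k1 k2 => ?_
    by_cases a : h = h₁
    · subst a
      rw [he1] at k1
      exact hedge v v' (k1.imp id And.right) (k2.resolve_right fun k => ho _ hι₁ hι₁₂ k.1)
    by_cases b : h = h₂
    · subst b
      rw [he2] at k1
      exact hrefl v v' (k1.imp id And.right) (k2.elim (fun k => .inr k) (fun k => .inr k.2))
    by_cases a' : h = C.Γ.ι h₁
    · subst a'
      rw [inv, he1] at k2
      exact (hedge v' v (k2.imp id And.right) (k1.resolve_right fun k => ho _ hι₁ hι₁₂ k.1)).symm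
    by_cases b' : h = C.Γ.ι h₂
    · subst b'
      rw [inv, he2] at k2
      exact hrefl v v' (k1.elim (fun k => .inr k) (fun k => .inr k.2)) (k2.imp id And.right)
    refine .rel _ _ ⟨⟨h, a, b⟩, fun e => hh ?_, ?_, ?_⟩
    · exact (j3 h a' b').symm.trans (congrArg Subtype.val e)
    · exact Subtype.ext (k1.resolve_right fun k => ho _ a b k.1).symm
    · exact Subtype.ext ((congrArg C.Γ.ε (j3 h a' b')).trans
        (k2.resolve_right fun k => ho _ (ine _ _ a') (ine _ _ b') k.1).symm)
  have hleaf : ∀ v : (C.Γ.shrink D).V,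
      IsLeaf (C.Γ.shrink D) (fun v => C.w v.1) v ↔ IsLeaf C.Γ C.w v.1 := by
    intro v
    unfold IsLeaf
    rw [valence_shrink, valence_eq]
    have : {h | h ≠ D.a ∧ h ≠ D.b ∧ D.ε' h = v.1} = {h | C.Γ.ε h = v.1} := by
      ext h
      refine ⟨fun k => k.2.2, fun k => ⟨?_, ?_, k⟩⟩
      · rintro rfl; exact v.2 (k.symm.trans ((hend _).2 (Or.inl rfl)))
      · rintro rfl; exact v.2 (k.symm.trans ((hend _).2 (Or.inr rfl)))
    rw [this]
  let l : C.Γ.H → ℝ≥0∞ := fun h =>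
    if h = C.Γ.ι h₁ ∨ h = C.Γ.ι h₂ then C.len h₁ + C.len h₂ else C.len h
  have l1 : ∀ h, (h = C.Γ.ι h₁ ∨ h = C.Γ.ι h₂) → l h = C.len h₁ + C.len h₂ :=
    fun h hh => if_pos hh
  have l2 : ∀ h, h ≠ C.Γ.ι h₁ → h ≠ C.Γ.ι h₂ → l h = C.len h :=
    fun h a b => if_neg (not_or.2 ⟨a, b⟩)
  have l_symm : ∀ h, h ≠ D.a → h ≠ D.b → l (D.ι' h) = l h := by
    intro h k1 k2
    change l (j h) = l h
    by_cases a : h = C.Γ.ι h₁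
    · rw [l1 h (.inl a), a, j1, l1 _ (.inr rfl)]
    by_cases b : h = C.Γ.ι h₂
    · rw [l1 h (.inr b), b, j2, l1 _ (.inl rfl)]
    · rw [j3 h a b, l2 h a b, l2 _ (iine _ _ k1) (iine _ _ k2), C.len_symm]
  have l_pos : ∀ h, 0 < l h := by
    intro h
    by_cases hh : h = C.Γ.ι h₁ ∨ h = C.Γ.ι h₂
    · rw [l1 h hh]; exact add_pos_of_pos_of_nonneg (C.len_pos _) zero_le
    · rw [not_or] at hh
      rw [l2 h hh.1 hh.2]; exact C.len_pos h
  have hnv : ¬ IsLeaf C.Γ C.w v₀ := fun k => by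
    have := k.1
    omega
  have t1 : C.len h₁ = ⊤ ↔ IsLeaf C.Γ C.w (C.Γ.ε (C.Γ.ι h₁)) := by
    have := C.len_top_iff h₁
    rw [(hend h₁).2 (Or.inl rfl)] at this
    exact this.trans ((or_iff_right hι₁).trans (or_iff_right hnv))
  have t2 : C.len h₂ = ⊤ ↔ IsLeaf C.Γ C.w (C.Γ.ε (C.Γ.ι h₂)) := by
    have := C.len_top_iff h₂
    rw [(hend h₂).2 (Or.inr rfl)] at this
    exact this.trans ((or_iff_right hι₂).trans (or_iff_right hnv))
  have l_top : ∀ h, h ≠ D.a → h ≠ D.b → (l h = ⊤ ↔ (C.Γ.ι h = h ∨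
      IsLeaf C.Γ C.w (D.ε' h) ∨ IsLeaf C.Γ C.w (D.ε' (D.ι' h)))) := by
    intro h _ _
    change l h = ⊤ ↔ (C.Γ.ι h = h ∨
      IsLeaf C.Γ C.w (C.Γ.ε h) ∨ IsLeaf C.Γ C.w (C.Γ.ε (j h)))
    by_cases a : h = C.Γ.ι h₁
    · rw [l1 h (.inl a), ENNReal.add_eq_top, t1, t2, a, j1, inv]
      exact (or_iff_right hι₁.symm).symm
    by_cases b : h = C.Γ.ι h₂
    · rw [l1 h (.inr b), ENNReal.add_eq_top, t1, t2, b, j2, inv, or_comm]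
      exact (or_iff_right hι₂.symm).symm
    · rw [l2 h a b, j3 h a b]
      exact C.len_top_iff h
  exact ⟨C.shrinkCurve D hw hD l l_symm l_pos l_top hleaf,
    Or.inr (Or.inl ⟨v₀, h₁, h₂, hv, hw, h12, (hend _).2 (Or.inl rfl), (hend _).2 (Or.inr rfl),
      hι₁, hι₂, hι₁₂, C.Γ.inclV D, C.Γ.inclH D, C.Γ.inclV_injective D, C.Γ.range_inclV D,
      C.Γ.inclH_injective D, C.Γ.range_inclH D, fun _ => rfl, fun _ => rfl, fun _ => rfl,
      fun x => ⟨fun e => (congrArg j e).trans j1, fun e => (congrArg j e).trans j2,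
        fun a b => j3 _ a b⟩,
      fun x => ⟨fun e => l1 _ e, fun a b => l2 _ a b⟩⟩), C.Γ.card_V_shrink D⟩

/-- Move (ii) at a vertex with the leg `h₁` and an edge starting with `h₂`: the leg is moved
to the other end of that edge. -/
lemma exists_move2b (C : TropCurve g n) (v₀ : C.Γ.V) (h₁ h₂ : C.Γ.H)
    (hs : {h | C.Γ.ε h = v₀} = {h₁, h₂}) (h12 : h₁ ≠ h₂) (hw : C.w v₀ = 0)
    (hι₁ : C.Γ.ι h₁ = h₁) (hι₂ : C.Γ.ι h₂ ≠ h₂) :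
    ∃ C' : TropCurve g n, ElemMove C C' ∧ Nat.card C'.Γ.V + 1 = Nat.card C.Γ.V := by
  have hv : C.Γ.valence v₀ = 2 := by rw [valence_eq, hs, Set.ncard_pair h12]
  have hend : ∀ h, C.Γ.ε h = v₀ ↔ h = h₁ ∨ h = h₂ := fun h => by
    have := Set.ext_iff.1 hs h
    simpa using this
  have inv := C.Γ.ι_invol
  have hι₂₁ : C.Γ.ι h₂ ≠ h₁ := fun e => h12 (by rw [← inv h₂, e, hι₁])
  have hu : C.Γ.ε (C.Γ.ι h₂) ≠ v₀ := fun e => ((hend _).1 e).elim hι₂₁ hι₂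
  let e' : C.Γ.H → C.Γ.V := fun h => if h = h₁ then C.Γ.ε (C.Γ.ι h₂) else C.Γ.ε h
  have e1 : e' h₁ = C.Γ.ε (C.Γ.ι h₂) := if_pos rfl
  have e2 : ∀ h, h ≠ h₁ → e' h = C.Γ.ε h := fun h hh => if_neg hh
  have iine : ∀ h, h ≠ h₁ → C.Γ.ι h ≠ h₁ := fun h hk e => hk (by rw [← inv h, e, hι₁])
  let D : C.Γ.Shrink :=
    { v₀ := v₀
      a := h₂
      b := C.Γ.ι h₂
      ι' := C.Γ.ι
      ε' := e'
      u := C.Γ.ε (C.Γ.ι h₂)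
      hu := hu
      hab := hι₂.symm
      ha := hι₂
      hb := fun e => hι₂ (C.Γ.iota_inj e)
      ne_a := fun h _ k2 e => k2 (by rw [← e, inv])
      ne_b := fun h k1 _ e => k1 (C.Γ.iota_inj e)
      invol := fun h _ _ => inv h
      fix := fun h _ _ => Iff.rfl
      ne_v₀ := fun h k1 _ => by
        by_cases a : h = h₁
        · rwa [a, e1]
        · rw [e2 h a]
          exact fun e => ((hend _).1 e).elim a k1 }
  have hD : (C.Γ.shrink D).IsConnected := by
    have hrefl : ∀ v v' : (C.Γ.shrink D).V,
        (v.1 = v₀ ∨ v.1 = D.u) → (v'.1 = v₀ ∨ v'.1 = D.u) →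
        Relation.EqvGen (C.Γ.shrink D).adjRel v v' := by
      intro v v' h h'
      have e : v = v' := Subtype.ext
        ((h.resolve_left v.2).trans (h'.resolve_left v'.2).symm)
      exact e ▸ .refl _
    have he2 : C.Γ.ε h₂ = v₀ := (hend _).2 (Or.inr rfl)
    refine shrink_connected C.conn D fun h hh v v' k1 k2 => ?_
    by_cases b : h = h₂
    · subst b
      rw [he2] at k1
      exact hrefl v v' (k1.imp id And.right) (k2.elim (fun k => .inr k) (fun k => .inr k.2))
    by_cases b' : h = C.Γ.ι h₂
    · subst b'
      rw [inv, he2] at k2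
      exact hrefl v v' (k1.elim (fun k => .inr k) (fun k => .inr k.2)) (k2.imp id And.right)
    have a : h ≠ h₁ := by rintro rfl; exact hh hι₁
    refine .rel _ _ ⟨⟨h, b, b'⟩, fun e => hh (congrArg Subtype.val e), ?_, ?_⟩
    · exact Subtype.ext ((e2 h a).trans
        (k1.resolve_right fun k => ((hend _).1 k.1).elim a b).symm)
    · exact Subtype.ext ((e2 _ (iine h a)).trans
        (k2.resolve_right fun k => ((hend _).1 k.1).elim (iine h a) (D.ne_a h b b')).symm)
  have hval : ∀ v : (C.Γ.shrink D).V, (C.Γ.shrink D).valence v = C.Γ.valence v.1 := by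
    intro v
    rw [valence_shrink, valence_eq]
    -- At `u`, the half-edge `ι h₂` is traded for the leg `h₁`.
    have himg : {h | C.Γ.ε h = v.1} = Equiv.swap h₁ (C.Γ.ι h₂) ''
        {h | h ≠ D.a ∧ h ≠ D.b ∧ D.ε' h = v.1} := by
      rw [Equiv.image_eq_preimage_symm, Equiv.symm_swap]
      ext h
      change C.Γ.ε h = v.1 ↔ (Equiv.swap h₁ (C.Γ.ι h₂) h ≠ h₂ ∧
        Equiv.swap h₁ (C.Γ.ι h₂) h ≠ C.Γ.ι h₂ ∧ e' (Equiv.swap h₁ (C.Γ.ι h₂) h) = v.1)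
      by_cases a : h = h₁
      · subst a
        rw [Equiv.swap_apply_left, (hend h).2 (.inl rfl)]
        exact iff_of_false (fun e => v.2 e.symm) (fun k => k.2.1 rfl)
      by_cases b : h = C.Γ.ι h₂
      · subst b
        rw [Equiv.swap_apply_right, e1]
        exact ⟨fun k => ⟨h12, hι₂₁.symm, k⟩, fun k => k.2.2⟩
      rw [Equiv.swap_apply_of_ne_of_ne a b, e2 h a]
      refine ⟨fun k => ⟨?_, b, k⟩, fun k => k.2.2⟩
      rintro rfl
      exact v.2 (k.symm.trans ((hend _).2 (Or.inr rfl)))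
    rw [himg, Set.ncard_image_of_injective _ (Equiv.injective _)]
  have hleaf : ∀ v : (C.Γ.shrink D).V,
      IsLeaf (C.Γ.shrink D) (fun v => C.w v.1) v ↔ IsLeaf C.Γ C.w v.1 := by
    intro v
    unfold IsLeaf
    rw [hval]
  have l_top : ∀ h, h ≠ D.a → h ≠ D.b → (C.len h = ⊤ ↔ (C.Γ.ι h = h ∨
      IsLeaf C.Γ C.w (D.ε' h) ∨ IsLeaf C.Γ C.w (D.ε' (D.ι' h)))) := by
    intro h _ _
    by_cases a : h = h₁
    · subst a
      exact iff_of_true ((C.len_top_iff h).2 (.inl hι₁)) (.inl hι₁)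
    · change C.len h = ⊤ ↔ (C.Γ.ι h = h ∨
        IsLeaf C.Γ C.w (e' h) ∨ IsLeaf C.Γ C.w (e' (C.Γ.ι h)))
      rw [e2 h a, e2 _ (iine h a)]
      exact C.len_top_iff h
  exact ⟨C.shrinkCurve D hw hD C.len (fun h _ _ => C.len_symm h) C.len_pos l_top hleaf,
    Or.inr (Or.inr ⟨v₀, h₁, h₂, hv, hw, h12, (hend _).2 (Or.inl rfl), (hend _).2 (Or.inr rfl),
      hι₁, hι₂, C.Γ.inclV D, C.Γ.inclH D, C.Γ.inclV_injective D, C.Γ.range_inclV D,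
      C.Γ.inclH_injective D, C.Γ.range_inclH D, fun _ => rfl, fun _ => rfl,
      fun x => ⟨fun e => ⟨(congrArg C.Γ.ι e).trans (hι₁), (congrArg e' e).trans e1,
          (congrArg C.len e).trans ((C.len_top_iff h₁).2 (.inl hι₁))⟩,
        fun e => ⟨rfl, e2 _ e, rfl⟩⟩⟩), C.Γ.card_V_shrink D⟩

/-! ### Small graphs, and the induction -/

/-- If all half-edges at `v` stay at `v`, then `v` is the only vertex, and
`2g + n = 2 w(v) + val(v)`. -/
lemma genus_of_closed (C : TropCurve g n) (v : C.Γ.V)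
    (hc : ∀ h, C.Γ.ε h = v → C.Γ.ε (C.Γ.ι h) = v) :
    2 * g + n = 2 * C.w v + C.Γ.valence v := by
  have hall : ∀ x, x = v := fun x => univ_of_closed C.conn {v} rfl hc x
  have hV : Nat.card C.Γ.V = 1 :=
    Nat.card_eq_one_iff_unique.2 ⟨⟨fun a b => (hall a).trans (hall b).symm⟩, ⟨v⟩⟩
  have hval : C.Γ.valence v = Nat.card C.Γ.H := by
    rw [valence_eq, ← Set.ncard_univ]
    congr 1
    ext h
    simp [hall]
  have hw : ∑ᶠ x, C.w x = C.w v :=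
    finsum_eq_single _ v fun x hx => absurd (hall x) hx
  have hg := C.genus_eq
  rw [genus, b1, numComps_eq_one C.conn, hV, hw] at hg
  rw [hval, C.Γ.card_H]
  omega

lemma exists_move_of_valence_two (hgn : 1 ≤ 2 * (g : ℤ) - 2 + n) (C : TropCurve g n)
    (v : C.Γ.V) (hv : C.Γ.valence v = 2) (hw : C.w v = 0) :
    ∃ C' : TropCurve g n, ElemMove C C' ∧ Nat.card C'.Γ.V + 1 = Nat.card C.Γ.V := by
  have hv' := hv
  rw [valence_eq, Set.ncard_eq_two] at hv'
  obtain ⟨h₁, h₂, h12, hs⟩ := hv'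
  have hend : ∀ h, C.Γ.ε h = v ↔ h = h₁ ∨ h = h₂ := fun h => by
    have := Set.ext_iff.1 hs h
    simpa using this
  have hcon : ¬ ∀ h, C.Γ.ε h = v → C.Γ.ε (C.Γ.ι h) = v := fun hc => by
    have := C.genus_of_closed v hc
    omega
  have hstay : C.Γ.ε (C.Γ.ι h₁) = v → C.Γ.ε (C.Γ.ι h₂) = v → False := by
    refine fun k1 k2 => hcon fun h hh => ?_
    rcases (hend h).1 hh with rfl | rfl
    · exact k1
    · exact k2
  by_cases a : C.Γ.ι h₁ = h₁
  · by_cases b : C.Γ.ι h₂ = h₂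
    · exact (hstay (by rw [a, hend]; exact .inl rfl) (by rw [b, hend]; exact .inr rfl)).elim
    · exact C.exists_move2b v h₁ h₂ hs h12 hw a b
  by_cases b : C.Γ.ι h₂ = h₂
  · exact C.exists_move2b v h₂ h₁ (hs.trans (Set.pair_comm _ _)) h12.symm hw b a
  by_cases c : C.Γ.ι h₁ = h₂
  · have c' : C.Γ.ι h₂ = h₁ := by rw [← c, C.Γ.ι_invol]
    exact (hstay (by rw [c, hend]; exact .inr rfl) (by rw [c', hend]; exact .inl rfl)).elim
  exact C.exists_move2a v h₁ h₂ hs h12 hw a b c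

lemma exists_move_of_valence_one (hgn : 1 ≤ 2 * (g : ℤ) - 2 + n) (C : TropCurve g n)
    (v : C.Γ.V) (hv : C.Γ.valence v = 1) (hw : C.w v = 0) :
    ∃ C' : TropCurve g n, ElemMove C C' ∧ Nat.card C'.Γ.V + 1 = Nat.card C.Γ.V := by
  have hv' := hv
  rw [valence_eq, Set.ncard_eq_one] at hv'
  obtain ⟨h₀, hs⟩ := hv'
  have hend : ∀ h, C.Γ.ε h = v ↔ h = h₀ := fun h => by
    have := Set.ext_iff.1 hs h
    simpa using this
  obtain rfl : C.Γ.ε h₀ = v := (hend _).2 rfl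
  by_cases a : C.Γ.ι h₀ = h₀
  · have := C.genus_of_closed _ fun h hh => by rw [(hend h).1 hh, a]
    omega
  set u := C.Γ.ε (C.Γ.ι h₀) with hu
  have huv : u ≠ C.Γ.ε h₀ := fun e => a ((hend _).1 e)
  by_cases hwu : C.w u = 0
  swap
  · exact C.exists_move1 h₀ hv hw a fun h => absurd h hwu
  by_cases h2 : C.Γ.valence u = 2
  · exact exists_move_of_valence_two hgn C u h2 hwu
  by_cases h3 : 3 ≤ C.Γ.valence u
  · exact C.exists_move1 h₀ hv hw a fun _ => h3
  -- Otherwise `u` is a leaf as well, and the graph is a single edge: `g = n = 0`.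
  exfalso
  have hpos : 0 < C.Γ.valence u := by
    rw [valence_eq, Set.ncard_pos]
    exact ⟨C.Γ.ι h₀, rfl⟩
  have h1 : C.Γ.valence u = 1 := by omega
  rw [valence_eq, Set.ncard_eq_one] at h1
  obtain ⟨k, hk⟩ := h1
  have hendu : ∀ h, C.Γ.ε h = u → h = C.Γ.ι h₀ := by
    intro h hh
    have m1 : h ∈ {h | C.Γ.ε h = u} := hh
    have m2 : C.Γ.ι h₀ ∈ {h | C.Γ.ε h = u} := rfl
    rw [hk] at m1 m2
    exact m1.trans m2.symm
  have hall : ∀ x, x ∈ ({C.Γ.ε h₀, u} : Set C.Γ.V) := by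
    refine univ_of_closed C.conn _ (Or.inl rfl) ?_
    rintro h (hh | hh)
    · rw [(hend h).1 hh]; exact Or.inr rfl
    · rw [hendu h hh, C.Γ.ι_invol]; exact Or.inl rfl
  have hV : Nat.card C.Γ.V = 2 := by
    rw [← Set.ncard_univ, ← Set.eq_univ_of_forall hall, Set.ncard_pair huv.symm]
  have hH : Nat.card C.Γ.H = 2 := by
    have : ∀ h, h ∈ ({h₀, C.Γ.ι h₀} : Set C.Γ.H) := fun h =>
      (hall (C.Γ.ε h)).imp (hend h).1 (hendu h)
    rw [← Set.ncard_univ, ← Set.eq_univ_of_forall this, Set.ncard_pair (Ne.symm a)]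
  have hw0 : ∑ᶠ x, C.w x = 0 := by
    refine finsum_eq_zero_of_forall_eq_zero fun x => ?_
    rcases hall x with rfl | rfl
    · exact hw
    · exact hwu
  have hg := C.genus_eq
  rw [genus, b1, numComps_eq_one C.conn, hV, hw0] at hg
  rw [C.Γ.card_H] at hH
  omega

lemma exists_move_of_not_stable (hgn : 1 ≤ 2 * (g : ℤ) - 2 + n) (C : TropCurve g n)
    (hst : ¬ C.Γ.Stable C.w) :
    ∃ C' : TropCurve g n, ElemMove C C' ∧ Nat.card C'.Γ.V + 1 = Nat.card C.Γ.V := by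
  -- A `0`-valent vertex is the whole graph, so `2g - 2 + n = 2 w(v) - 2` and `w(v) ≥ 2`.
  have hzero : ∀ v, C.Γ.valence v = 0 → 2 ≤ C.w v := by
    intro v hv
    have := C.genus_of_closed v fun h hh => by
      rw [valence_eq, Set.ncard_eq_zero] at hv
      exact absurd (show h ∈ {h | C.Γ.ε h = v} from hh) (by simp [hv])
    omega
  simp only [Stable, not_forall] at hst
  obtain ⟨v, hv⟩ := hst
  have h0 := hzero v
  by_cases hw : C.w v = 0
  · by_cases h1 : C.Γ.valence v = 1
    · exact exists_move_of_valence_one hgn C v h1 hw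
    by_cases h2 : C.Γ.valence v = 2
    · exact exists_move_of_valence_two hgn C v h2 hw
    omega
  · omega

end TropCurve

theorem stmt_8 (g n : ℕ) (hgn : 1 ≤ 2 * (g : ℤ) - 2 + n) (C : TropCurve g n) :
    ∃ C' : TropCurve g n, TropCurve.TropEquiv C C' ∧ C'.Γ.Stable C'.w := by
  induction hN : Nat.card C.Γ.V using Nat.strong_induction_on generalizing C with
  | _ N ih =>
    by_cases hst : C.Γ.Stable C.w
    · exact ⟨C, .refl _, hst⟩
    · obtain ⟨C₁, hm, hc⟩ := TropCurve.exists_move_of_not_stable hgn C hst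
      obtain ⟨C', he, hs⟩ := ih _ (by omega) C₁ rfl
      exact ⟨C', .trans _ _ _ (.rel _ _ hm) he, hs⟩
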